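/- For every integer n ≥ 1, the function χ_n(z) = −ψ_{2n}(z;N) + (1 − a_{2n−1}(N))·ψ_{2n−1}(z;N) (which equals (z − z^{−1}) times the sieved Jacobi polynomial of the second kind Q_{n−1} in the variable x = z + 1/z) satisfies, for all z ∈ ℂ with z ≠ 0 and z^{2N} ≠ 1, the eigenvalue equation (L(N)(L(N)χ_n))(z) − N(α+β+1)·(L(N)χ_n)(z) = n·(n + N(α+β+1))·χ_n(z). -/

import Mathlib

open Finset

/-- Monic OPUC associated to a sequence of (real) Verblunsky parameters. -/
noncomputable def Phi (c : ℕ → ℝ) : ℕ → ℂ → ℂ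
  | 0, _ => 1
  | n + 1, z => z * Phi c n z - (c n : ℂ) * z ^ n * Phi c n z⁻¹

/-- CMV Laurent polynomials: ψ_{2m} z = z^m Φ_{2m}(1/z), ψ_{2m+1} z = z^{-m} Φ_{2m+1}(z). -/
noncomputable def psi (c : ℕ → ℝ) (n : ℕ) (z : ℂ) : ℂ :=
  if Even n then z ^ (n / 2) * Phi c n z⁻¹
  else z ^ (-((n / 2 : ℕ) : ℤ)) * Phi c n z

/-- Verblunsky parameters of the Jacobi OPUC. -/
noncomputable def jacobiA (α β : ℝ) (n : ℕ) : ℝ :=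
  -(α + 1 / 2 + (-1 : ℝ) ^ (n + 1) * (β + 1 / 2)) / (n + α + β + 2)

/-- Sieved Verblunsky parameters: a_n(N) = a_{k-1} if n = N k - 1 (k ≥ 1), 0 otherwise. -/
noncomputable def sievedA (α β : ℝ) (N n : ℕ) : ℝ :=
  if N ∣ (n + 1) then jacobiA α β ((n + 1) / N - 1) else 0

/-- The primitive N-th root of unity q = exp(2πi/N). -/
noncomputable def qN (N : ℕ) : ℂ := Complex.exp (2 * Real.pi * Complex.I / N)

/-- The coefficients A_k(z;N) of the Dunkl-type operator L(N). -/
noncomputable def Acoef (α β : ℝ) (N k : ℕ) (z : ℂ) : ℂ :=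
  if Even N then
    ((α : ℂ) + β + 1 + (-1 : ℂ) ^ k * ((α : ℂ) - β)) * z ^ 2 / (qN N ^ k - z ^ 2)
  else
    (((α : ℂ) + β + 1) * z ^ 2 +
        (if Even k then qN N ^ ((k : ℤ) / 2) else qN N ^ (((k : ℤ) - (N : ℤ)) / 2)) *
          ((α : ℂ) - β) * z) /
      (qN N ^ k - z ^ 2)

/-- B(z) = N((α+β+1) z^{2N} + (α-β) z^N)/(z^{2N} - 1). -/
noncomputable def Bfun (α β : ℝ) (N : ℕ) (z : ℂ) : ℂ :=
  (N : ℂ) * (((α : ℂ) + β + 1) * z ^ (2 * N) + ((α : ℂ) - β) * z ^ N) / (z ^ (2 * N) - 1)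

/-- The Dunkl-type operator L(N). -/
noncomputable def Lop (α β : ℝ) (N : ℕ) (f : ℂ → ℂ) : ℂ → ℂ := fun z =>
  z * deriv f z + ∑ k ∈ Finset.range N, Acoef α β N k z * (f (qN N ^ k / z) - f z)

/-- A function ℂ∖{0} → ℂ is a Laurent polynomial. -/
def IsLaurentPoly (f : ℂ → ℂ) : Prop :=
  ∃ (m : ℕ) (p : Polynomial ℂ), ∀ z : ℂ, z ≠ 0 → f z = Polynomial.eval z p / z ^ m

/-- Sieved Jacobi polynomial of the first kind, as a function of z (x = z + 1/z). -/
noncomputable def sievP (α β : ℝ) (N n : ℕ) (z : ℂ) : ℂ :=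
  psi (sievedA α β N) (2 * n) z
    + (1 + (sievedA α β N (2 * n - 1) : ℂ)) * psi (sievedA α β N) (2 * n - 1) z

/-- χ_n(z) = (z - 1/z) Q_{n-1}(x(z)), with Q the sieved Jacobi polynomial of 2nd kind. -/
noncomputable def sievChi (α β : ℝ) (N n : ℕ) (z : ℂ) : ℂ :=
  -psi (sievedA α β N) (2 * n) z
    + (1 - (sievedA α β N (2 * n - 1) : ℂ)) * psi (sievedA α β N) (2 * n - 1) z

lemma qN_prim (N : ℕ) (hN : 1 ≤ N) : IsPrimitiveRoot (qN N) N :=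
  Complex.isPrimitiveRoot_exp N (by omega)

lemma qN_ne (N : ℕ) : qN N ≠ 0 := Complex.exp_ne_zero _

lemma qN_pow_pow (N : ℕ) (hN : 1 ≤ N) (k : ℕ) : (qN N ^ k) ^ N = 1 := by
  rw [← pow_mul, mul_comm, pow_mul, (qN_prim N hN).pow_eq_one, one_pow]

lemma sum_zpow (N : ℕ) (hN : 1 ≤ N) (l : ℤ) :
    ∑ k ∈ Finset.range N, (qN N ^ k) ^ l = if (N : ℤ) ∣ l then (N : ℂ) else 0 := by
  have h1 : ∀ k : ℕ, (qN N ^ k) ^ l = (qN N ^ l) ^ k := by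
    intro k
    rw [← zpow_natCast, ← zpow_natCast, ← zpow_mul, ← zpow_mul, mul_comm]
  simp only [h1]
  split_ifs with h
  · rw [((qN_prim N hN).zpow_eq_one_iff_dvd l).2 h]; simp
  · have hne : qN N ^ l ≠ 1 := fun h' => h (((qN_prim N hN).zpow_eq_one_iff_dvd l).1 h')
    have h2 : (qN N ^ l) ^ N = 1 := by
      rw [← zpow_natCast, ← zpow_mul, mul_comm, zpow_mul, zpow_natCast,
        (qN_prim N hN).pow_eq_one, one_zpow]
    rw [geom_sum_eq hne, h2]; simp

lemma sum_frac (N : ℕ) (hN : 1 ≤ N) (x : ℂ) (hx : x ^ N ≠ 1) (s : ℤ) (h1 : 1 ≤ s)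
    (h2 : s ≤ N) :
    ∑ k ∈ Finset.range N, (qN N ^ k) ^ s / (qN N ^ k - x) = - N * x ^ (s - 1) / (x ^ N - 1) := by
  have hx' : x ^ N - 1 ≠ 0 := sub_ne_zero.2 hx
  have key : ∀ k : ℕ, (qN N ^ k) ^ s / (qN N ^ k - x) * (x ^ N - 1)
      = - ∑ i ∈ Finset.range N, x ^ i * (qN N ^ k) ^ (s - 1 - i) := by
    intro k
    have hζN := qN_pow_pow N hN k
    have hζ0 : qN N ^ k ≠ 0 := pow_ne_zero _ (qN_ne N)
    generalize qN N ^ k = ζ at *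
    have hne : ζ - x ≠ 0 := by
      intro h
      apply hx
      rw [← sub_eq_zero.1 h, hζN]
    have hg := Commute.geom_sum₂_mul (Commute.all x ζ) N
    rw [hζN] at hg
    rw [← hg]
    have : ∑ i ∈ Finset.range N, x ^ i * ζ ^ (s - 1 - i)
       = ζ ^ s * ∑ i ∈ Finset.range N, x ^ i * ζ ^ (N - 1 - i) := by
      rw [Finset.mul_sum]
      apply Finset.sum_congr rfl
      intro i hi
      have hi' := Finset.mem_range.1 hi
      have : ζ ^ (N - 1 - i) = ζ ^ (-1 - i : ℤ) := by
        rw [← zpow_natCast, show ((N - 1 - i : ℕ) : ℤ) = (N : ℤ) + (-1 - i) by omega,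
          zpow_add₀ hζ0, zpow_natCast, hζN, one_mul]
      rw [this, show s - 1 - (i : ℤ) = s + (-1 - i) by ring, zpow_add₀ hζ0]
      ring
    rw [this]
    field_simp
    ring
  rw [eq_div_iff hx', Finset.sum_mul, Finset.sum_congr rfl (fun k _ => key k),
    Finset.sum_neg_distrib, Finset.sum_comm]
  simp only [← Finset.mul_sum, sum_zpow N hN]
  obtain ⟨t, ht⟩ : ∃ t : ℕ, s = t + 1 := ⟨(s - 1).toNat, by omega⟩
  subst ht
  rw [Finset.sum_eq_single t]
  · simp; ring
  · intro i hi hit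
    have hi' := Finset.mem_range.1 hi
    rw [if_neg, mul_zero]
    intro hd
    have := Int.eq_zero_of_abs_lt_dvd hd (by rw [abs_lt]; constructor <;> omega)
    omega
  · intro h; exact absurd (Finset.mem_range.2 (by omega)) h

lemma Acoef_eq (α β : ℝ) (N : ℕ) (hN : 1 ≤ N) : ∃ h : ℕ, N ≤ 2 * h ∧ 2 * h ≤ N + 1 ∧
    ∀ k z, Acoef α β N k z = (((α : ℂ) + β + 1) * z ^ 2 +
      ((α : ℂ) - β) * ((qN N ^ k) ^ (h : ℤ) * z ^ (N + 2 - 2 * h))) / (qN N ^ k - z ^ 2) := by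
  have hq := (qN_prim N hN).pow_eq_one
  have hq0 := qN_ne N
  rcases Nat.even_or_odd' N with ⟨h, hh | hh⟩
  · refine ⟨h, by omega, by omega, fun k z => ?_⟩
    have hm : qN N ^ h = -1 := by
      have := (qN_prim N hN).pow (a := h) (b := 2) (by omega) (by omega)
      exact IsPrimitiveRoot.eq_neg_one_of_two_right this
    rw [Acoef, if_pos (by rw [hh]; simp), show N + 2 - 2 * h = 2 by omega, zpow_natCast, ← pow_mul,
      mul_comm k h, pow_mul, hm]
    ring
  · refine ⟨h + 1, by omega, by omega, fun k z => ?_⟩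
    rw [Acoef, if_neg (by rw [hh]; simp), show N + 2 - 2 * (h + 1) = 1 by omega, zpow_natCast]
    have : (if Even k then qN N ^ ((k : ℤ) / 2) else qN N ^ (((k : ℤ) - (N : ℤ)) / 2))
        = (qN N ^ k) ^ (h + 1) := by
      rcases Nat.even_or_odd' k with ⟨j, hj | hj⟩
      · rw [if_pos (by rw [hj]; simp), show (k : ℤ) / 2 = (j : ℕ) by omega, zpow_natCast, ← pow_mul,
          show k * (h + 1) = j + N * j by rw [hj, hh]; ring, pow_add, pow_mul, hq]
        simp
      · rw [if_neg (by rw [hj]; simp), show ((k : ℤ) - N) / 2 = j - h by omega, zpow_sub₀ hq0,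
          div_eq_iff (zpow_ne_zero _ hq0), zpow_natCast, zpow_natCast, ← pow_mul, ← pow_add,
          show k * (h + 1) + h = j + N * (j + 1) by rw [hj, hh]; ring, pow_add, pow_mul, hq]
        simp
    rw [this]
    ring

noncomputable def Ssum (α β : ℝ) (N : ℕ) (s : ℤ) (z : ℂ) : ℂ :=
  ∑ k ∈ Finset.range N, Acoef α β N k z * (qN N ^ k) ^ s

lemma Ssum_period (α β : ℝ) (N : ℕ) (hN : 1 ≤ N) (s : ℤ) (z : ℂ) :
    Ssum α β N (s + N) z = Ssum α β N s z := by
  unfold Ssum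
  apply Finset.sum_congr rfl
  intro k _
  rw [zpow_add₀ (pow_ne_zero _ (qN_ne N)), zpow_natCast, qN_pow_pow N hN, mul_one]

lemma Ssum_pos (α β : ℝ) (N : ℕ) (hN : 1 ≤ N) (s : ℤ) (z : ℂ) (hz : z ≠ 0)
    (hz2 : z ^ (2 * N) ≠ 1) (h1 : 0 < 2 * s) (h2 : 2 * s ≤ N) :
    Ssum α β N s z = - N * z ^ (2 * s) * (((α : ℂ) + β + 1) + ((α : ℂ) - β) * z ^ N)
      / (z ^ (2 * N) - 1) := by
  obtain ⟨h, ha, hb, hA⟩ := Acoef_eq α β N hN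
  have hx : (z ^ 2) ^ N ≠ 1 := by rwa [← pow_mul]
  have e1 := sum_frac N hN (z ^ 2) hx s (by omega) (by omega)
  have e2 := sum_frac N hN (z ^ 2) hx (s + h) (by omega) (by omega)
  have : Ssum α β N s z = ((α : ℂ) + β + 1) * z ^ 2 *
      (∑ k ∈ Finset.range N, (qN N ^ k) ^ s / (qN N ^ k - z ^ 2)) +
      ((α : ℂ) - β) * z ^ (N + 2 - 2 * h) *
      (∑ k ∈ Finset.range N, (qN N ^ k) ^ (s + h) / (qN N ^ k - z ^ 2)) := by
    unfold Ssum
    rw [Finset.mul_sum, Finset.mul_sum, ← Finset.sum_add_distrib]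
    apply Finset.sum_congr rfl
    intro k _
    rw [hA, zpow_add₀ (pow_ne_zero _ (qN_ne N))]
    ring
  rw [this, e1, e2, ← pow_mul]
  have t1 : z ^ 2 * (z ^ 2) ^ (s - 1) = z ^ (2 * s) := by
    rw [← zpow_natCast z 2, ← zpow_mul, ← zpow_add₀ hz]; congr 1; push_cast; ring
  have t2 : z ^ (N + 2 - 2 * h) * (z ^ 2) ^ (s + h - 1) = z ^ (2 * s) * z ^ N := by
    rw [← zpow_natCast z 2, ← zpow_mul, ← zpow_natCast z (N + 2 - 2 * h), ← zpow_natCast z N,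
      ← zpow_add₀ hz, ← zpow_add₀ hz]
    congr 1; push_cast [show 2 * h ≤ N + 2 by omega]; ring
  linear_combination (-(((α : ℂ) + β + 1)) * N / (z ^ (2 * N) - 1)) * t1
    - (((α : ℂ) - β) * N / (z ^ (2 * N) - 1)) * t2

lemma Ssum_neg (α β : ℝ) (N : ℕ) (hN : 1 ≤ N) (s : ℤ) (z : ℂ) (hz : z ≠ 0)
    (hz2 : z ^ (2 * N) ≠ 1) (h1 : -(N : ℤ) < 2 * s) (h2 : 2 * s ≤ 0) :
    Ssum α β N s z = - N * z ^ (2 * s) *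
      (((α : ℂ) + β + 1) * z ^ (2 * N) + ((α : ℂ) - β) * z ^ N) / (z ^ (2 * N) - 1) := by
  obtain ⟨h, ha, hb, hA⟩ := Acoef_eq α β N hN
  have hx : (z ^ 2) ^ N ≠ 1 := by rwa [← pow_mul]
  have e1 := sum_frac N hN (z ^ 2) hx (s + N) (by omega) (by omega)
  have e2 := sum_frac N hN (z ^ 2) hx (s + h) (by omega) (by omega)
  have : Ssum α β N s z = ((α : ℂ) + β + 1) * z ^ 2 *
      (∑ k ∈ Finset.range N, (qN N ^ k) ^ (s + N) / (qN N ^ k - z ^ 2)) +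
      ((α : ℂ) - β) * z ^ (N + 2 - 2 * h) *
      (∑ k ∈ Finset.range N, (qN N ^ k) ^ (s + h) / (qN N ^ k - z ^ 2)) := by
    unfold Ssum
    rw [Finset.mul_sum, Finset.mul_sum, ← Finset.sum_add_distrib]
    apply Finset.sum_congr rfl
    intro k _
    rw [hA, zpow_add₀ (pow_ne_zero _ (qN_ne N)), zpow_add₀ (pow_ne_zero _ (qN_ne N)),
      zpow_natCast _ N, qN_pow_pow N hN]
    ring
  rw [this, e1, e2, ← pow_mul]
  have t1 : z ^ 2 * (z ^ 2) ^ (s + N - 1) = z ^ (2 * s) * z ^ (2 * N) := by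
    rw [← zpow_natCast z 2, ← zpow_mul, ← zpow_natCast z (2 * N), ← zpow_add₀ hz, ← zpow_add₀ hz]
    congr 1; push_cast; ring
  have t2 : z ^ (N + 2 - 2 * h) * (z ^ 2) ^ (s + h - 1) = z ^ (2 * s) * z ^ N := by
    rw [← zpow_natCast z 2, ← zpow_mul, ← zpow_natCast z (N + 2 - 2 * h), ← zpow_natCast z N,
      ← zpow_add₀ hz, ← zpow_add₀ hz]
    congr 1; push_cast [show 2 * h ≤ N + 2 by omega]; ring
  linear_combination (-(((α : ℂ) + β + 1)) * N / (z ^ (2 * N) - 1)) * t1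
    - (((α : ℂ) - β) * N / (z ^ (2 * N) - 1)) * t2

/-- action of L on z^s F(z^N) -/
lemma Lop_mono (α β : ℝ) (N : ℕ) (hN : 1 ≤ N) (s : ℤ) (F : ℂ → ℂ) (F' z : ℂ) (hz : z ≠ 0)
    (hF : HasDerivAt F F' (z ^ N)) :
    Lop α β N (fun y => y ^ s * F (y ^ N)) z =
      z ^ s * (s * F (z ^ N) + N * z ^ N * F') + Ssum α β N s z * z ^ (-s) * F (z ^ N)⁻¹
        - Ssum α β N 0 z * z ^ s * F (z ^ N) := by
  have hd : HasDerivAt (fun y => y ^ s * F (y ^ N))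
      (s * z ^ (s - 1) * F (z ^ N) + z ^ s * (F' * (N * z ^ (N - 1)))) z :=
    (hasDerivAt_zpow s z (Or.inl hz)).mul (hF.comp z (hasDerivAt_pow N z))
  unfold Lop
  rw [hd.deriv]
  have e1 : z * (s * z ^ (s - 1) * F (z ^ N) + z ^ s * (F' * (N * z ^ (N - 1))))
      = z ^ s * (s * F (z ^ N) + N * z ^ N * F') := by
    obtain ⟨M, rfl⟩ : ∃ M, N = M + 1 := ⟨N - 1, by omega⟩
    rw [zpow_sub_one₀ hz]
    simp only [Nat.add_sub_cancel]
    field_simp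
    ring
  rw [e1]
  have e2 : ∀ k : ℕ, Acoef α β N k z * ((qN N ^ k / z) ^ s * F ((qN N ^ k / z) ^ N) - z ^ s * F (z ^ N))
      = Acoef α β N k z * (qN N ^ k) ^ s * (z ^ (-s) * F (z ^ N)⁻¹)
        - Acoef α β N k z * (qN N ^ k) ^ (0 : ℤ) * (z ^ s * F (z ^ N)) := by
    intro k
    rw [div_zpow, div_pow, qN_pow_pow N hN, zpow_zero, zpow_neg, one_div]
    ring
  rw [Finset.sum_congr rfl (fun k _ => e2 k), Finset.sum_sub_distrib, ← Finset.sum_mul,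
    ← Finset.sum_mul]
  unfold Ssum
  ring

lemma Phi_succ (c : ℕ → ℝ) (n : ℕ) (z : ℂ) :
    Phi c (n + 1) z = z * Phi c n z - (c n : ℂ) * z ^ n * Phi c n z⁻¹ := by
  rw [Phi]

lemma Phi_diff (c : ℕ → ℝ) (n : ℕ) : ∀ z : ℂ, z ≠ 0 → DifferentiableAt ℂ (Phi c n) z := by
  induction n with
  | zero =>
    intro z _
    have : Phi c 0 = fun _ => 1 := by funext y; simp [Phi]
    rw [this]; fun_prop
  | succ n ih =>
    intro z hz
    have : Phi c (n + 1) = fun z => z * Phi c n z - (c n : ℂ) * z ^ n * Phi c n z⁻¹ := by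
      funext y; simp [Phi]
    rw [this]
    have h1 := ih z hz
    have h2 : DifferentiableAt ℂ (fun y => Phi c n y⁻¹) z :=
      DifferentiableAt.comp (g := Phi c n) (f := fun y => y⁻¹) z (ih z⁻¹ (inv_ne_zero hz)) (differentiableAt_inv hz)
    fun_prop

lemma Phi_succ_deriv (c : ℕ → ℝ) (n : ℕ) (z : ℂ) (hz : z ≠ 0) :
    z * deriv (Phi c (n + 1)) z = z * (Phi c n z + z * deriv (Phi c n) z)
      - c n * (n * z ^ n * Phi c n z⁻¹ - z ^ n * (z⁻¹ * deriv (Phi c n) z⁻¹)) := by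
  have : Phi c (n + 1) = fun z => z * Phi c n z - (c n : ℂ) * z ^ n * Phi c n z⁻¹ := by
    funext y; simp [Phi]
  rw [this]
  have h1 := (Phi_diff c n z hz).hasDerivAt
  have h2 : HasDerivAt (fun y => Phi c n y⁻¹) (deriv (Phi c n) z⁻¹ * (-(z ^ 2)⁻¹)) z :=
    HasDerivAt.comp (h₂ := Phi c n) (h := fun y => y⁻¹) z (Phi_diff c n z⁻¹ (inv_ne_zero hz)).hasDerivAt (hasDerivAt_inv hz)
  have h3 := ((hasDerivAt_id z).mul h1).sub (((hasDerivAt_pow n z).const_mul (c n : ℂ)).mul h2)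
  rw [show deriv (fun z => z * Phi c n z - (c n : ℂ) * z ^ n * Phi c n z⁻¹) z = _ from h3.deriv]
  rcases n with _ | n
  · simp; field_simp
    try ring
  · simp only [Nat.add_sub_cancel, id]
    field_simp
    push_cast
    ring

/-- differential relations for the Jacobi OPUC -/
lemma Phi_rel (α β : ℝ) (hα : -1 < α) (hβ : -1 < β) (p : ℕ) :
    (∀ w : ℂ, w ≠ 0 → (w ^ 2 - 1) * (w * deriv (Phi (jacobiA α β) (2 * p)) w) =
      (2 * p * (w ^ 2 - 1) - (α + β + 1) - (α - β) * w) * Phi (jacobiA α β) (2 * p) w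
       + ((α + β + 1) + (α - β) * w) * (w ^ (2 * p) * Phi (jacobiA α β) (2 * p) w⁻¹)) ∧
    (∀ w : ℂ, w ≠ 0 → (w ^ 2 - 1) * (w * deriv (Phi (jacobiA α β) (2 * p + 1)) w) =
      ((2 * p + 1) * (w ^ 2 - 1) - (α + β + 1) - (α - β) * w) * Phi (jacobiA α β) (2 * p + 1) w
       + ((α + β + 1) * w + (α - β)) * (w ^ (2 * p + 1) * Phi (jacobiA α β) (2 * p + 1) w⁻¹)) := by
  have aev : ∀ p : ℕ, (jacobiA α β (2 * p) : ℂ) * (2 * p + 1 + (α + β + 1)) = -(α - β) := by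
    intro p
    have h : ((2 * p : ℕ) : ℝ) + α + β + 2 ≠ 0 := by
      have : (0 : ℝ) ≤ ((2 * p : ℕ) : ℝ) := Nat.cast_nonneg _
      linarith
    have h2 : jacobiA α β (2 * p) * (2 * p + 1 + (α + β + 1)) = -(α - β) := by
      unfold jacobiA
      rw [div_mul_eq_mul_div, div_eq_iff h, pow_succ, pow_mul]; push_cast; norm_num; ring
    exact_mod_cast h2
  have aod : ∀ p : ℕ, (jacobiA α β (2 * p + 1) : ℂ) * (2 * p + 2 + (α + β + 1)) = -(α + β + 1) := by
    intro p
    have h : ((2 * p + 1 : ℕ) : ℝ) + α + β + 2 ≠ 0 := by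
      have : (0 : ℝ) ≤ ((2 * p : ℕ) : ℝ) := Nat.cast_nonneg _
      push_cast at *
      linarith
    have h2 : jacobiA α β (2 * p + 1) * (2 * p + 2 + (α + β + 1)) = -(α + β + 1) := by
      unfold jacobiA
      rw [div_mul_eq_mul_div, div_eq_iff h, pow_succ, pow_succ, pow_mul]; push_cast; norm_num; ring
    exact_mod_cast h2
  have step1 : ∀ p : ℕ, (∀ w : ℂ, w ≠ 0 → (w ^ 2 - 1) * (w * deriv (Phi (jacobiA α β) (2 * p)) w) =
      (2 * p * (w ^ 2 - 1) - (α + β + 1) - (α - β) * w) * Phi (jacobiA α β) (2 * p) w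
       + ((α + β + 1) + (α - β) * w) * (w ^ (2 * p) * Phi (jacobiA α β) (2 * p) w⁻¹)) →
    (∀ w : ℂ, w ≠ 0 → (w ^ 2 - 1) * (w * deriv (Phi (jacobiA α β) (2 * p + 1)) w) =
      ((2 * p + 1) * (w ^ 2 - 1) - (α + β + 1) - (α - β) * w) * Phi (jacobiA α β) (2 * p + 1) w
       + ((α + β + 1) * w + (α - β)) * (w ^ (2 * p + 1) * Phi (jacobiA α β) (2 * p + 1) w⁻¹)) := by
    intro p ih w hw
    have i1 := ih w hw
    have i2 := ih w⁻¹ (inv_ne_zero hw)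
    have ha := aev p
    rw [Phi_succ_deriv _ _ _ hw]
    rw [Phi_succ _ (2 * p) w, Phi_succ _ (2 * p) w⁻¹]
    simp only [inv_inv, inv_pow] at *
    generalize deriv (Phi (jacobiA α β) (2 * p)) w = X' at *
    generalize deriv (Phi (jacobiA α β) (2 * p)) w⁻¹ = Y' at *
    generalize Phi (jacobiA α β) (2 * p) w = X at *
    generalize Phi (jacobiA α β) (2 * p) w⁻¹ = Y at *
    generalize (jacobiA α β (2 * p) : ℂ) = a at *
    rw [pow_succ w (2 * p)] at *
    have hW : w ^ (2 * p) ≠ 0 := pow_ne_zero _ hw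
    push_cast at *
    generalize w ^ (2 * p) = W at *
    have i2' : (w ^ 2 - 1) * (W * (w⁻¹ * Y')) = W * ((2 * p * (w ^ 2 - 1) + (α + β + 1) * w ^ 2 + (α - β) * w) * Y)
       - ((α + β + 1) * w ^ 2 + (α - β) * w) * X := by
      field_simp at i2 ⊢
      linear_combination (-1 : ℂ) * i2
    have e2 : W * w * (w⁻¹ * Y - a * W⁻¹ * X) = W * Y - a * w * X := by field_simp
    rw [e2]
    linear_combination w * i1 + a * i2' + (w ^ 2 - 1) * W * Y * ha
  have step2 : ∀ p : ℕ, (∀ w : ℂ, w ≠ 0 → (w ^ 2 - 1) * (w * deriv (Phi (jacobiA α β) (2 * p + 1)) w) =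
      ((2 * p + 1) * (w ^ 2 - 1) - (α + β + 1) - (α - β) * w) * Phi (jacobiA α β) (2 * p + 1) w
       + ((α + β + 1) * w + (α - β)) * (w ^ (2 * p + 1) * Phi (jacobiA α β) (2 * p + 1) w⁻¹)) →
    (∀ w : ℂ, w ≠ 0 → (w ^ 2 - 1) * (w * deriv (Phi (jacobiA α β) (2 * p + 1 + 1)) w) =
      ((2 * p + 2) * (w ^ 2 - 1) - (α + β + 1) - (α - β) * w) * Phi (jacobiA α β) (2 * p + 1 + 1) w
       + ((α + β + 1) + (α - β) * w) * (w ^ (2 * p + 1 + 1) * Phi (jacobiA α β) (2 * p + 1 + 1) w⁻¹)) := by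
    intro p ih w hw
    have i1 := ih w hw
    have i2 := ih w⁻¹ (inv_ne_zero hw)
    have ha := aod p
    rw [Phi_succ_deriv _ _ _ hw, Phi_succ _ (2 * p + 1) w, Phi_succ _ (2 * p + 1) w⁻¹]
    simp only [inv_inv, inv_pow] at *
    generalize deriv (Phi (jacobiA α β) (2 * p + 1)) w = X' at *
    generalize deriv (Phi (jacobiA α β) (2 * p + 1)) w⁻¹ = Y' at *
    generalize Phi (jacobiA α β) (2 * p + 1) w = X at *
    generalize Phi (jacobiA α β) (2 * p + 1) w⁻¹ = Y at *
    generalize (jacobiA α β (2 * p + 1) : ℂ) = a at *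
    rw [pow_succ w (2 * p + 1)] at *
    have hW : w ^ (2 * p + 1) ≠ 0 := pow_ne_zero _ hw
    push_cast at *
    generalize w ^ (2 * p + 1) = W at *
    have i2' : (w ^ 2 - 1) * (W * (w⁻¹ * Y')) = W * (((2 * p + 1) * (w ^ 2 - 1) + (α + β + 1) * w ^ 2 + (α - β) * w) * Y)
       - ((α + β + 1) * w + (α - β) * w ^ 2) * X := by
      field_simp at i2 ⊢
      linear_combination (-1 : ℂ) * i2
    have e2 : W * w * (w⁻¹ * Y - a * W⁻¹ * X) = W * Y - a * w * X := by field_simp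
    rw [e2]
    linear_combination w * i1 + a * i2' + (w ^ 2 - 1) * W * Y * ha
  have base : ∀ p : ℕ, (∀ w : ℂ, w ≠ 0 → (w ^ 2 - 1) * (w * deriv (Phi (jacobiA α β) (2 * p)) w) =
      (2 * p * (w ^ 2 - 1) - (α + β + 1) - (α - β) * w) * Phi (jacobiA α β) (2 * p) w
       + ((α + β + 1) + (α - β) * w) * (w ^ (2 * p) * Phi (jacobiA α β) (2 * p) w⁻¹)) := by
    intro p
    induction p with
    | zero =>
      intro w hw
      have : Phi (jacobiA α β) 0 = fun _ => 1 := by funext y; simp [Phi]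
      simp [this]
      ring
    | succ p ih =>
      have h := step2 p (step1 p ih)
      intro w hw
      have h' := h w hw
      rw [show 2 * (p + 1) = 2 * p + 1 + 1 by ring]
      push_cast
      rw [h']
      ring
  exact ⟨base p, step1 p (base p)⟩

lemma Phi_sieved (α β : ℝ) (N : ℕ) (hN : 1 ≤ N) (m : ℕ) : ∀ j : ℕ, j < N → ∀ z : ℂ, z ≠ 0 →
    Phi (sievedA α β N) (N * m + j) z = z ^ j * Phi (jacobiA α β) m (z ^ N) := by
  have inner : ∀ m : ℕ, (∀ z : ℂ, z ≠ 0 → Phi (sievedA α β N) (N * m) z = Phi (jacobiA α β) m (z ^ N)) →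
      ∀ j : ℕ, j < N → ∀ z : ℂ, z ≠ 0 →
      Phi (sievedA α β N) (N * m + j) z = z ^ j * Phi (jacobiA α β) m (z ^ N) := by
    intro m h0 j
    induction j with
    | zero => intro _ z hz; simp [h0 z hz]
    | succ j ih =>
      intro hj z hz
      have h0' : sievedA α β N (N * m + j) = 0 := by
        unfold sievedA
        rw [if_neg]
        rw [add_assoc, Nat.dvd_add_right (Dvd.intro m rfl)]
        intro hd
        have := Nat.le_of_dvd (by omega) hd
        omega
      rw [← add_assoc, Phi, h0', ih (by omega) z hz]
      push_cast; ring
  have outer : ∀ z : ℂ, z ≠ 0 → Phi (sievedA α β N) (N * m) z = Phi (jacobiA α β) m (z ^ N) := by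
    induction m with
    | zero => intro z _; simp [Phi]
    | succ m ih =>
      intro z hz
      obtain ⟨M, rfl⟩ : ∃ M, N = M + 1 := ⟨N - 1, by omega⟩
      have h := inner m ih M (by omega)
      have ha : sievedA α β (M + 1) ((M + 1) * m + M) = jacobiA α β m := by
        unfold sievedA
        have : (M + 1) * m + M + 1 = (M + 1) * (m + 1) := by ring
        rw [this, if_pos (Dvd.intro _ rfl), Nat.mul_div_cancel_left _ (by omega)]
        simp
      rw [show (M + 1) * (m + 1) = (M + 1) * m + M + 1 by ring, Phi, ha, h z hz,
        h z⁻¹ (inv_ne_zero hz), Phi, inv_pow, inv_pow, pow_add z ((M + 1) * m) M, pow_mul]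
      field_simp
      ring
  exact inner m outer

lemma chi_eq (α β : ℝ) (N : ℕ) (hN : 1 ≤ N) (m i n : ℕ) (hi : i < N) (hn : 2 * n = N * m + i + 1)
    (z : ℂ) (hz : z ≠ 0) : sievChi α β N n z =
      z ^ (1 - n + i : ℤ) * Phi (jacobiA α β) m (z ^ N)
      - z ^ (n - 1 - i : ℤ) * Phi (jacobiA α β) m (z ^ N)⁻¹ := by
  have h1 := Phi_sieved α β N hN m i hi z hz
  have h2 := Phi_sieved α β N hN m i hi z⁻¹ (inv_ne_zero hz)
  obtain ⟨k, rfl⟩ : ∃ k, n = k + 1 := ⟨n - 1, by omega⟩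
  have e1 : N * m + i = 2 * k + 1 := by omega
  rw [e1] at h1 h2
  unfold sievChi psi
  rw [if_pos (by simp), show 2 * (k + 1) - 1 = 2 * k + 1 by omega, if_neg (by simp),
    show 2 * (k + 1) / 2 = k + 1 by omega, show (2 * k + 1) / 2 = k by omega,
    show 2 * (k + 1) = 2 * k + 1 + 1 by ring, Phi, inv_inv, h1, h2]
  have f1 : z ^ (1 - ((k + 1 : ℕ) : ℤ) + i) = (z ^ k)⁻¹ * z ^ i := by
    rw [show (1 - ((k + 1 : ℕ) : ℤ) + i) = -(k : ℤ) + i by push_cast; ring, zpow_add₀ hz, zpow_neg]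
    simp
  have f2 : z ^ (((k + 1 : ℕ) : ℤ) - 1 - i) = z ^ k * (z ^ i)⁻¹ := by
    rw [show (((k + 1 : ℕ) : ℤ) - 1 - i) = (k : ℤ) + -i by push_cast; ring, zpow_add₀ hz, zpow_neg]
    simp
  rw [f1, f2, zpow_neg, zpow_natCast, inv_pow, inv_pow, inv_pow]
  have : z ^ (2 * k + 1) = z ^ k * z ^ k * z := by ring
  rw [this, pow_succ z k]
  field_simp
  ring


def TEig (α β : ℝ) (G : ℂ → ℂ) (l : ℂ) : Prop :=
  ∀ w : ℂ, w ≠ 0 → ∃ G' : ℂ, HasDerivAt G G' w ∧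
    (w ^ 2 - 1) * (w * G') + (((α : ℂ) + β + 1) * w ^ 2 + ((α : ℂ) - β) * w) * (G w - G w⁻¹)
      = (w ^ 2 - 1) * l * G w

lemma TEig_even (α β : ℝ) (hα : -1 < α) (hβ : -1 < β) (p : ℕ) :
    TEig α β (fun w => w ^ p * Phi (jacobiA α β) (2 * p) w⁻¹) (-p) := by
  intro w hw
  have h2 : HasDerivAt (fun y => Phi (jacobiA α β) (2 * p) y⁻¹)
      (deriv (Phi (jacobiA α β) (2 * p)) w⁻¹ * (-(w ^ 2)⁻¹)) w :=
    HasDerivAt.comp (h₂ := Phi (jacobiA α β) (2 * p)) (h := fun y => y⁻¹) w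
      (Phi_diff _ _ w⁻¹ (inv_ne_zero hw)).hasDerivAt (hasDerivAt_inv hw)
  refine ⟨_, (hasDerivAt_pow p w).mul h2, ?_⟩
  have i2 := (Phi_rel α β hα hβ p).1 w⁻¹ (inv_ne_zero hw)
  have e : w * (p * w ^ (p - 1)) = p * w ^ p := by
    rcases p with _ | p
    · simp
    · simp only [Nat.add_sub_cancel]; ring
  simp only [inv_inv, inv_pow] at *
  generalize deriv (Phi (jacobiA α β) (2 * p)) w⁻¹ = Y' at *
  generalize Phi (jacobiA α β) (2 * p) w = X at *
  generalize Phi (jacobiA α β) (2 * p) w⁻¹ = Y at *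
  have hW : w ^ p ≠ 0 := pow_ne_zero _ hw
  have e2 : w ^ (2 * p) = w ^ p * w ^ p := by ring
  rw [e2] at i2
  generalize w ^ p = W at *
  generalize (p : ℂ) * w ^ (p - 1) = D at *
  have hD : D = p * W / w := by rw [eq_div_iff hw, ← e]; ring
  subst hD
  field_simp at i2 ⊢
  linear_combination i2

lemma TEig_odd (α β : ℝ) (hα : -1 < α) (hβ : -1 < β) (p : ℕ) :
    TEig α β (fun w => (w ^ p)⁻¹ * Phi (jacobiA α β) (2 * p + 1) w) (p + 1 + (α + β + 1)) := by
  intro w hw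
  have hW : w ^ p ≠ 0 := pow_ne_zero _ hw
  refine ⟨_, ((hasDerivAt_pow p w).inv hW).mul (Phi_diff _ _ w hw).hasDerivAt, ?_⟩
  have i2 := (Phi_rel α β hα hβ p).2 w hw
  have e : w * (p * w ^ (p - 1)) = p * w ^ p := by
    rcases p with _ | p
    · simp
    · simp only [Nat.add_sub_cancel]; ring
  simp only [inv_inv, inv_pow] at *
  generalize deriv (Phi (jacobiA α β) (2 * p + 1)) w = X' at *
  generalize Phi (jacobiA α β) (2 * p + 1) w = X at *
  generalize Phi (jacobiA α β) (2 * p + 1) w⁻¹ = Y at *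
  have e2 : w ^ (2 * p + 1) = w ^ p * w ^ p * w := by ring
  rw [e2] at i2
  simp only [Pi.inv_apply]
  generalize w ^ p = W at *
  generalize (p : ℂ) * w ^ (p - 1) = D at *
  have hD : D = p * W / w := by rw [eq_div_iff hw, ← e]; ring
  subst hD
  field_simp at i2 ⊢
  linear_combination i2

noncomputable def Uf (N r : ℕ) (G : ℂ → ℂ) (z : ℂ) : ℂ := z ^ (r : ℤ) * G (z ^ N)⁻¹
noncomputable def Vf (N r : ℕ) (G : ℂ → ℂ) (z : ℂ) : ℂ := z ^ (-(r : ℤ)) * G (z ^ N)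

lemma LV_eq (α β : ℝ) (N : ℕ) (hN : 1 ≤ N) (r : ℕ) (hr : 2 * r ≤ N) (G : ℂ → ℂ) (l : ℂ)
    (hG : TEig α β G l) (z : ℂ) (hz : z ≠ 0) (hz2 : z ^ (2 * N) ≠ 1) :
    Lop α β N (Vf N r G) z = (-r + N * l) * Vf N r G z
      + (if 2 * r = N then -N * ((α : ℂ) - β) else 0) * Uf N r G z := by
  obtain ⟨G', hG', hrel⟩ := hG (z ^ N) (pow_ne_zero _ hz)
  have h := Lop_mono α β N hN (-r) G G' z hz hG'
  have hV : Vf N r G = fun y => y ^ (-(r : ℤ)) * G (y ^ N) := rfl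
  rw [hV, h, Ssum_neg α β N hN 0 z hz hz2 (by omega) (by omega)]
  have hd : z ^ (2 * N) - 1 ≠ 0 := sub_ne_zero.2 hz2
  have hww : z ^ (2 * N) = (z ^ N) ^ 2 := by rw [← pow_mul, mul_comm]
  have hZ : z ^ r ≠ 0 := pow_ne_zero _ hz
  have hw : z ^ N ≠ 0 := pow_ne_zero _ hz
  unfold Uf
  split_ifs with hc
  · have hs : Ssum α β N (-r) z = Ssum α β N r z := by
      rw [← Ssum_period α β N hN (-r)]
      congr 1; omega
    have e2 : z ^ (2 * (r : ℤ)) = z ^ r * z ^ r := by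
      rw [two_mul, zpow_add₀ hz, zpow_natCast]
    have e3 : z ^ N = z ^ r * z ^ r := by rw [← hc]; ring
    rw [hs, Ssum_pos α β N hN r z hz hz2 (by omega) (by omega), e2]
    rw [hww] at hd ⊢; clear hww
    simp only [mul_zero, zpow_zero, neg_neg, zpow_neg, zpow_natCast]
    generalize G (z ^ N)⁻¹ = Y at *
    generalize G (z ^ N) = X at *
    rw [e3] at hd hrel ⊢; clear e3
    generalize z ^ r = Z at *
    have hd4 : Z ^ 4 - 1 ≠ 0 := by convert hd using 2; ring
    push_cast
    field_simp
    linear_combination N * hrel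
  · have e2 : z ^ (2 * (-r : ℤ)) = (z ^ r)⁻¹ * (z ^ r)⁻¹ := by
      rw [two_mul, zpow_add₀ hz, zpow_neg, zpow_natCast]
    rw [Ssum_neg α β N hN (-r) z hz hz2 (by omega) (by omega), e2]
    rw [hww] at hd ⊢; clear hww
    simp only [mul_zero, zpow_zero, neg_neg, zpow_neg, zpow_natCast]
    generalize G (z ^ N)⁻¹ = Y at *
    generalize G (z ^ N) = X at *
    generalize z ^ r = Z at *
    generalize z ^ N = w at *
    push_cast
    field_simp
    linear_combination N * hrel

lemma LU_eq (α β : ℝ) (N : ℕ) (hN : 1 ≤ N) (r : ℕ) (hr : 2 * r ≤ N) (G : ℂ → ℂ) (l : ℂ)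
    (hG : TEig α β G l) (z : ℂ) (hz : z ≠ 0) (hz2 : z ^ (2 * N) ≠ 1) :
    Lop α β N (Uf N r G) z = (N * ((α : ℂ) + β + 1) + r - N * l) * Uf N r G z
      + (if r = 0 then -N * ((α : ℂ) + β + 1) else 0) * Vf N r G z := by
  have hw : z ^ N ≠ 0 := pow_ne_zero _ hz
  obtain ⟨G', hG', hrel⟩ := hG (z ^ N)⁻¹ (inv_ne_zero hw)
  have hGi : HasDerivAt (fun y => G y⁻¹) (G' * (-((z ^ N) ^ 2)⁻¹)) (z ^ N) :=
    HasDerivAt.comp (h₂ := G) (h := fun y => y⁻¹) (z ^ N) hG' (hasDerivAt_inv hw)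
  have h := Lop_mono α β N hN r _ _ z hz hGi
  have hU : Uf N r G = fun y => y ^ (r : ℤ) * G (y ^ N)⁻¹ := rfl
  rw [hU, h, Ssum_neg α β N hN 0 z hz hz2 (by omega) (by omega)]
  have hd : z ^ (2 * N) - 1 ≠ 0 := sub_ne_zero.2 hz2
  have hww : z ^ (2 * N) = (z ^ N) ^ 2 := by rw [← pow_mul, mul_comm]
  have hZ : z ^ r ≠ 0 := pow_ne_zero _ hz
  unfold Vf
  have e2 : z ^ (2 * (r : ℤ)) = z ^ r * z ^ r := by
    rw [two_mul, zpow_add₀ hz, zpow_natCast]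
  simp only [inv_inv, inv_pow] at *
  split_ifs with hc
  · subst hc
    rw [Ssum_neg α β N hN _ z hz hz2 (by omega) (by omega), e2]
    rw [hww] at hd ⊢; clear hww
    simp only [mul_zero, zpow_zero, zpow_neg, zpow_natCast]
    generalize G (z ^ N)⁻¹ = Y at *
    generalize G (z ^ N) = X at *
    generalize z ^ N = w at *
    push_cast
    simp only [pow_zero]
    have hrel' : (w ^ 2 - 1) * (w⁻¹ * G') = (w ^ 2 - 1) * l * Y
        + (((α : ℂ) + β + 1) + ((α : ℂ) - β) * w) * (Y - X) := by
      field_simp at hrel ⊢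
      linear_combination (-1 : ℂ) * hrel
    field_simp at hrel' ⊢
    linear_combination -N * hrel'
  · rw [Ssum_pos α β N hN r z hz hz2 (by omega) (by omega), e2]
    rw [hww] at hd ⊢; clear hww
    simp only [mul_zero, zpow_zero, zpow_neg, zpow_natCast]
    generalize G (z ^ N)⁻¹ = Y at *
    generalize G (z ^ N) = X at *
    generalize z ^ N = w at *
    generalize z ^ r = Z at *
    push_cast
    have hrel' : (w ^ 2 - 1) * (w⁻¹ * G') = (w ^ 2 - 1) * l * Y
        + (((α : ℂ) + β + 1) + ((α : ℂ) - β) * w) * (Y - X) := by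
      field_simp at hrel ⊢
      linear_combination (-1 : ℂ) * hrel
    field_simp at hrel' ⊢
    linear_combination -N * Z ^ 2 * hrel'

lemma Uf_diff (α β : ℝ) (N r : ℕ) (G : ℂ → ℂ) (l : ℂ)
    (hG : TEig α β G l) (z : ℂ) (hz : z ≠ 0) : DifferentiableAt ℂ (Uf N r G) z := by
  have hw : z ^ N ≠ 0 := pow_ne_zero _ hz
  obtain ⟨G', hG', -⟩ := hG (z ^ N)⁻¹ (inv_ne_zero hw)
  have h1 : HasDerivAt (fun y : ℂ => (y ^ N)⁻¹) _ z := (hasDerivAt_pow N z).inv hw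
  have h2 : DifferentiableAt ℂ (fun y : ℂ => G (y ^ N)⁻¹) z :=
    (HasDerivAt.comp (h₂ := G) (h := fun y : ℂ => (y ^ N)⁻¹) z hG' h1).differentiableAt
  exact (hasDerivAt_zpow r z (Or.inl hz)).differentiableAt.mul h2

lemma Vf_diff (α β : ℝ) (N r : ℕ) (G : ℂ → ℂ) (l : ℂ)
    (hG : TEig α β G l) (z : ℂ) (hz : z ≠ 0) : DifferentiableAt ℂ (Vf N r G) z := by
  have hw : z ^ N ≠ 0 := pow_ne_zero _ hz
  obtain ⟨G', hG', -⟩ := hG (z ^ N) hw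
  have h2 : DifferentiableAt ℂ (fun y : ℂ => G (y ^ N)) z :=
    (HasDerivAt.comp (h₂ := G) (h := fun y : ℂ => y ^ N) z hG' (hasDerivAt_pow N z)).differentiableAt
  exact (hasDerivAt_zpow (-r) z (Or.inl hz)).differentiableAt.mul h2

lemma Lop_congr (α β : ℝ) (N : ℕ) (hN : 1 ≤ N) (f g : ℂ → ℂ)
    (h : ∀ y : ℂ, y ≠ 0 → y ^ (2 * N) ≠ 1 → f y = g y)
    (z : ℂ) (hz : z ≠ 0) (hz2 : z ^ (2 * N) ≠ 1) : Lop α β N f z = Lop α β N g z := by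
  have he : f =ᶠ[nhds z] g := by
    have o1 : ∀ᶠ y in nhds z, y ≠ 0 := isOpen_ne.mem_nhds hz
    have o2 : ∀ᶠ y : ℂ in nhds z, y ^ (2 * N) ≠ 1 :=
      (continuous_pow (2 * N)).continuousAt.eventually_ne hz2
    filter_upwards [o1, o2] with y h1 h2 using h y h1 h2
  unfold Lop
  rw [he.deriv_eq, h z hz hz2]
  congr 1
  apply Finset.sum_congr rfl
  intro k _
  rw [h (qN N ^ k / z) (div_ne_zero (pow_ne_zero _ (qN_ne N)) hz)]
  rw [div_pow, mul_comm 2 N, pow_mul, qN_pow_pow N hN, one_pow, mul_comm N 2]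
  intro h'
  rw [one_div, inv_eq_one] at h'
  exact hz2 h'

lemma Lop_lin (α β : ℝ) (N : ℕ) (f g : ℂ → ℂ) (a b z : ℂ)
    (hf : DifferentiableAt ℂ f z) (hg : DifferentiableAt ℂ g z) :
    Lop α β N (fun y => a * f y + b * g y) z = a * Lop α β N f z + b * Lop α β N g z := by
  have hd : deriv (fun y => a * f y + b * g y) z = a * deriv f z + b * deriv g z :=
    ((hf.hasDerivAt.const_mul a).add (hg.hasDerivAt.const_mul b)).deriv
  unfold Lop
  rw [hd, mul_add a, mul_add b, Finset.mul_sum, Finset.mul_sum, add_add_add_comm,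
    ← Finset.sum_add_distrib]
  congr 1
  · ring
  · apply Finset.sum_congr rfl
    intro k _
    ring

lemma main_aux (α β : ℝ) (N : ℕ) (hN : 1 ≤ N) (r : ℕ) (hr : 2 * r ≤ N) (G : ℂ → ℂ) (l : ℂ)
    (hG : TEig α β G l) (a b : ℂ) (f : ℂ → ℂ)
    (hf : ∀ y : ℂ, y ≠ 0 → f y = a * Uf N r G y + b * Vf N r G y)
    (z : ℂ) (hz : z ≠ 0) (hz2 : z ^ (2 * N) ≠ 1) :
    Lop α β N (Lop α β N f) z - (N : ℂ) * ((α : ℂ) + β + 1) * Lop α β N f z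
      = -((-r + N * l) * (N * ((α : ℂ) + β + 1) + r - N * l)) * f z := by
  obtain ⟨k1, hk1⟩ : ∃ k : ℂ, k = (if 2 * r = N then -N * ((α : ℂ) - β) else 0) := ⟨_, rfl⟩
  obtain ⟨k2, hk2⟩ : ∃ k : ℂ, k = (if r = 0 then -N * ((α : ℂ) + β + 1) else 0) := ⟨_, rfl⟩
  have hk : k1 * k2 = 0 := by
    rw [hk1, hk2]
    by_cases h0 : r = 0
    · rw [if_neg (by omega), zero_mul]
    · rw [if_neg h0, mul_zero]
  have hlin : ∀ (a b : ℂ) (f : ℂ → ℂ), (∀ y : ℂ, y ≠ 0 → y ^ (2 * N) ≠ 1 →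
      f y = a * Uf N r G y + b * Vf N r G y) → ∀ y : ℂ, y ≠ 0 → y ^ (2 * N) ≠ 1 →
      Lop α β N f y = (a * (N * ((α : ℂ) + β + 1) + r - N * l) + b * k1) * Uf N r G y
        + (a * k2 + b * (-r + N * l)) * Vf N r G y := by
    intro a b f hf y hy hy2
    rw [Lop_congr α β N hN f _ hf y hy hy2, Lop_lin α β N _ _ a b y
      (Uf_diff α β N r G l hG y hy) (Vf_diff α β N r G l hG y hy),
      LU_eq α β N hN r hr G l hG y hy hy2, LV_eq α β N hN r hr G l hG y hy hy2, ← hk1, ← hk2]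
    ring
  have h1 := hlin a b f (fun y hy _ => hf y hy)
  have h2 := hlin _ _ _ h1 z hz hz2
  rw [h2, h1 z hz hz2, hf z hz]
  linear_combination (a * Uf N r G z + b * Vf N r G z) * hk

/-- the function χ_n(z) = -ψ_{2n}(z;N) + (1 - a_{2n-1}(N)) ψ_{2n-1}(z;N)
(equal to (z - 1/z) Q_{n-1}(x(z);N)) satisfies
(L(N)² - N(α+β+1)L(N)) χ_n = n(n + N(α+β+1)) χ_n. -/
theorem stmt_15 (α β : ℝ) (hα : -1 < α) (hβ : -1 < β) (N : ℕ) (hN : 1 ≤ N)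
    (n : ℕ) (hn : 1 ≤ n) (z : ℂ) (hz : z ≠ 0) (hz2 : z ^ (2 * N) ≠ 1) :
    Lop α β N (Lop α β N (sievChi α β N n)) z
      - (N : ℂ) * ((α : ℂ) + β + 1) * Lop α β N (sievChi α β N n) z
      = (n : ℂ) * ((n : ℂ) + (N : ℂ) * ((α : ℂ) + β + 1)) * sievChi α β N n z := by
  obtain ⟨m, i, hi, hmi⟩ : ∃ m i : ℕ, i < N ∧ 2 * n = N * m + i + 1 := by
    refine ⟨(2 * n - 1) / N, (2 * n - 1) % N, Nat.mod_lt _ (by omega), ?_⟩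
    have := Nat.div_add_mod (2 * n - 1) N
    omega
  have hchi := chi_eq α β N hN m i n hi hmi
  rcases Nat.even_or_odd' m with ⟨p, hp | hp⟩
  · subst hp
    have hmi' : 2 * n = 2 * (N * p) + i + 1 := by rw [hmi]; ring
    obtain ⟨r, hr⟩ : ∃ r, i + 1 = 2 * r := ⟨(i + 1) / 2, by omega⟩
    have hn' : n = N * p + r := by omega
    have h := main_aux α β N hN r (by omega) _ _ (TEig_even α β hα hβ p) 1 (-1)
      (sievChi α β N n) (by
        intro y hy
        rw [hchi y hy]
        unfold Uf Vf
        dsimp only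
        rw [show (1 - n + i : ℤ) = r + -((N * p : ℕ) : ℤ) by omega,
          show (n - 1 - i : ℤ) = -r + ((N * p : ℕ) : ℤ) by omega, zpow_add₀ hy, zpow_add₀ hy,
          zpow_neg y ((N * p : ℕ) : ℤ), zpow_natCast y (N * p), inv_inv, inv_pow, ← pow_mul]
        ring) z hz hz2
    rw [h, hn']
    push_cast
    ring
  · subst hp
    have hmi' : 2 * n = 2 * (N * p) + N + i + 1 := by rw [hmi]; ring
    obtain ⟨r, hr⟩ : ∃ r, N = i + 1 + 2 * r := ⟨(N - i - 1) / 2, by omega⟩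
    have hn' : n + r = N * p + N := by omega
    have hn2 : (n : ℂ) = N * p + N - r := by rw [eq_sub_iff_add_eq]; exact_mod_cast hn'
    have h := main_aux α β N hN r (by omega) _ _ (TEig_odd α β hα hβ p) (-1) 1
      (sievChi α β N n) (by
        intro y hy
        rw [hchi y hy]
        unfold Uf Vf
        dsimp only
        rw [show (1 - n + i : ℤ) = -r + -((N * p : ℕ) : ℤ) by omega,
          show (n - 1 - i : ℤ) = r + ((N * p : ℕ) : ℤ) by omega, zpow_add₀ hy, zpow_add₀ hy,
          zpow_neg y ((N * p : ℕ) : ℤ), zpow_natCast y (N * p), inv_pow, inv_inv, ← pow_mul]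
        ring) z hz hz2
    rw [h, hn2]
    ring
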